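/- Let N ≥ 1 and let U ⊆ ℂ^N be open. Let g : U → Matrix (Fin N) (Fin N) ℂ have holomorphic entries, with g(p) symmetric and invertible for every p ∈ U. For holomorphic vector fields V, W : U → ℂ^N and holomorphic f : U → ℂ define (V f)(p) = fderiv f p (V(p)), the bracket [V,W](p) = fderiv W p (V(p)) − fderiv V p (W(p)), and the pairing ⟨V,W⟩(p) = (V(p))ᵀ g(p) W(p). Then there exists a unique operation D assigning to each pair of holomorphic vector fields V, W on U a holomorphic vector field D_V W on U such that: (D1) D_V W is linear over holomorphic functions in V; (D2) D_V W is ℂ-linear in W; (D3) D_V(fW) = (Vf)·W + f·D_V W for every holomorphic f : U → ℂ; (D4) [V,W] = D_V W − D_W V; (D5) X⟨V,W⟩ = ⟨D_X V, W⟩ + ⟨V, D_X W⟩ for all holomorphic vector fields X, V, W. Moreover D is characterized by Koszul's formula: 2⟨D_V W, X⟩ = V⟨W,X⟩ + W⟨X,V⟩ − X⟨V,W⟩ − ⟨V,[W,X]⟩ + ⟨W,[X,V]⟩ + ⟨X,[V,W]⟩. -/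

import Mathlib

open Matrix Set

namespace LeviCivitaChart

/-- A holomorphic vector field on `U ⊆ ℂ^N`, identified with a holomorphic map
`U → ℂ^N`. -/
def HolVF (N : ℕ) (U : Set (Fin N → ℂ)) (V : (Fin N → ℂ) → (Fin N → ℂ)) : Prop :=
  DifferentiableOn ℂ V U

/-- A holomorphic function on `U ⊆ ℂ^N`. -/
def HolFn (N : ℕ) (U : Set (Fin N → ℂ)) (f : (Fin N → ℂ) → ℂ) : Prop :=
  DifferentiableOn ℂ f U

/-- The action `(V f)(p) = df_p(V(p))` of a vector field on a function. -/
noncomputable def act (N : ℕ) (V : (Fin N → ℂ) → (Fin N → ℂ))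
    (f : (Fin N → ℂ) → ℂ) (p : Fin N → ℂ) : ℂ :=
  fderiv ℂ f p (V p)

/-- The Lie bracket `[V,W](p) = dW_p(V(p)) − dV_p(W(p))`. -/
noncomputable def bracket (N : ℕ) (V W : (Fin N → ℂ) → (Fin N → ℂ))
    (p : Fin N → ℂ) : Fin N → ℂ :=
  fderiv ℂ W p (V p) - fderiv ℂ V p (W p)

/-- The metric pairing `⟨V,W⟩(p) = V(p)ᵀ g(p) W(p)`. -/
noncomputable def pairing (N : ℕ) (g : (Fin N → ℂ) → Matrix (Fin N) (Fin N) ℂ)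
    (V W : (Fin N → ℂ) → (Fin N → ℂ)) (p : Fin N → ℂ) : ℂ :=
  V p ⬝ᵥ (g p *ᵥ W p)

/-- `D` is a Levi-Civita connexion for the metric `g` on `U`: it takes pairs of
holomorphic vector fields to holomorphic vector fields and satisfies (D1)–(D5). -/
def IsLeviCivita (N : ℕ) (U : Set (Fin N → ℂ))
    (g : (Fin N → ℂ) → Matrix (Fin N) (Fin N) ℂ)
    (D : ((Fin N → ℂ) → (Fin N → ℂ)) → ((Fin N → ℂ) → (Fin N → ℂ)) →
      ((Fin N → ℂ) → (Fin N → ℂ))) : Prop :=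
  (∀ V W, HolVF N U V → HolVF N U W → DifferentiableOn ℂ (D V W) U) ∧
  -- (D1) linearity over holomorphic functions in the first argument
  (∀ f₁ f₂ V₁ V₂ W, HolFn N U f₁ → HolFn N U f₂ →
    HolVF N U V₁ → HolVF N U V₂ → HolVF N U W →
    ∀ p ∈ U, D (fun q => f₁ q • V₁ q + f₂ q • V₂ q) W p
      = f₁ p • D V₁ W p + f₂ p • D V₂ W p) ∧
  -- (D2) ℂ-linearity in the second argument
  (∀ (a b : ℂ) V W₁ W₂, HolVF N U V → HolVF N U W₁ → HolVF N U W₂ →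
    ∀ p ∈ U, D V (fun q => a • W₁ q + b • W₂ q) p = a • D V W₁ p + b • D V W₂ p) ∧
  -- (D3) Leibniz rule
  (∀ f V W, HolFn N U f → HolVF N U V → HolVF N U W →
    ∀ p ∈ U, D V (fun q => f q • W q) p = act N V f p • W p + f p • D V W p) ∧
  -- (D4) torsion-freeness
  (∀ V W, HolVF N U V → HolVF N U W →
    ∀ p ∈ U, bracket N V W p = D V W p - D W V p) ∧
  -- (D5) metric compatibility
  (∀ X V W, HolVF N U X → HolVF N U V → HolVF N U W →
    ∀ p ∈ U, act N X (pairing N g V W) p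
      = pairing N g (D X V) W p + pairing N g V (D X W) p)

/-!
Torsion-freeness and metric compatibility, combined over the three cyclic permutations of
`V, W, X`, give Koszul's formula; as `g` is nondegenerate, this determines `D_V W`. For existence,
put `D_V W = dW(V) + Γ(V, W)`, where `Γ(v, w)` is the vector representing the linear form
`x ↦ (∂_v g(w, x) + ∂_w g(v, x) - ∂_x g(v, w)) / 2` with respect to `g`. Its symmetry in `v, w`
gives torsion-freeness, and the sum of the forms at `(v, w, x)` and `(v, x, w)` is `∂_v g(w, x)`,
which is metric compatibility.

Holomorphy of `D_V W` requires that the derivative `p ↦ df_p(V(p))` of a holomorphic map along a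
holomorphic field be holomorphic. By the second-order Schwarz lemma the difference quotients
`(f(p + t V(p)) - f(p)) / t` converge to it locally uniformly as `t → 0`, so Weierstrass' theorem on
uniform limits of holomorphic maps applies.
-/

section Holomorphic

open Filter Metric Topology

theorem exists_ball_forall_norm_le {X F : Type*} [PseudoMetricSpace X] [SeminormedAddGroup F]
    {f : X → F} {U : Set X} {c : X} (hU : IsOpen U) (hf : ContinuousOn f U) (hc : c ∈ U) :
    ∃ r > 0, ∃ M, ball c r ⊆ U ∧ ∀ z ∈ ball c r, ‖f z‖ ≤ M := by
  have hM : ∀ᶠ z in 𝓝 c, ‖f z‖ < ‖f c‖ + 1 :=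
    (hf.continuousAt (hU.mem_nhds hc)).norm.eventually_lt_const (lt_add_one _)
  obtain ⟨r, hr, hball⟩ := Metric.mem_nhds_iff.1 (inter_mem (hU.mem_nhds hc) hM)
  exact ⟨r, hr, ‖f c‖ + 1, fun z hz => (hball hz).1, fun z hz => (hball hz).2.le⟩

variable {E F : Type*} [NormedAddCommGroup E] [NormedSpace ℂ E]
  [NormedAddCommGroup F] [NormedSpace ℂ F] {f : E → F} {U : Set E} {c z : E} {R M : ℝ}

theorem norm_fderiv_le_of_forall_norm_le (hR : 0 < R) (hf : DifferentiableOn ℂ f (ball c R))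
    (hM : ∀ z ∈ ball c R, ‖f z‖ ≤ M) : ‖fderiv ℂ f c‖ ≤ 2 * M / R := by
  refine Complex.norm_fderiv_le_div_of_mapsTo_ball hf (fun z hz => ?_) hR
  rw [mem_closedBall, dist_eq_norm]
  linarith [norm_sub_le (f z) (f c), hM z hz, hM c (mem_ball_self hR)]

theorem norm_sub_sub_fderiv_le_of_forall_norm_le (hf : DifferentiableOn ℂ f (ball c R))
    (hM : ∀ z ∈ ball c R, ‖f z‖ ≤ M) (hz : z ∈ ball c R) :
    ‖f z - f c - fderiv ℂ f c (z - c)‖ ≤ 4 * M * (‖z - c‖ / R) ^ 2 := by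
  have hR : 0 < R := pos_of_mem_ball hz
  have hfc : HasFDerivAt f (fderiv ℂ f c) c :=
    (hf.differentiableAt (ball_mem_nhds c hR)).hasFDerivAt
  -- The second-order Schwarz lemma applies to `f` minus its linear part at `c`.
  let h : E → F := fun w => f w - fderiv ℂ f c (w - c)
  have hsub (w : E) : h w - h c = f w - f c - fderiv ℂ f c (w - c) := by
    simp only [h, sub_self, map_zero, sub_zero]
    abel
  have hmaps : MapsTo h (ball c R) (closedBall (h c) (4 * M)) := by
    intro w hw
    have hlin : ‖fderiv ℂ f c (w - c)‖ ≤ 2 * M :=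
      calc ‖fderiv ℂ f c (w - c)‖ ≤ 2 * M / R * R :=
            (fderiv ℂ f c).le_of_opNorm_le_of_le (norm_fderiv_le_of_forall_norm_le hR hf hM)
              (mem_ball_iff_norm.1 hw).le
        _ = 2 * M := div_mul_cancel₀ _ hR.ne'
    rw [mem_closedBall, dist_eq_norm, hsub]
    linarith [norm_sub_le (f w - f c) (fderiv ℂ f c (w - c)), norm_sub_le (f w) (f c),
      hM w hw, hM c (mem_ball_self hR)]
  have hlittleO : (fun w => h w - h c) =o[𝓝 c] fun w => ‖w - c‖ ^ 1 := by
    simpa only [hsub, pow_one] using hfc.isLittleO.norm_right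
  have hh : DifferentiableOn ℂ h (ball c R) := hf.sub (by fun_prop)
  simpa only [dist_eq_norm, hsub] using
    Complex.dist_le_mul_div_pow_of_mapsTo_ball_of_isLittleO hh hmaps hlittleO hz

theorem uniformCauchySeqOn_fderiv {ι : Type*} {l : Filter ι} {G : ι → E → F} {r : ℝ} (hr : 0 < r)
    (hG : UniformCauchySeqOn G l (ball c (r + r)))
    (hd : ∀ᶠ i in l, DifferentiableOn ℂ (G i) (ball c (r + r))) :
    UniformCauchySeqOn (fun i => fderiv ℂ (G i)) l (ball c r) := by
  intro u hu
  obtain ⟨ε, hε, hεu⟩ := mem_uniformity_dist.1 hu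
  have hδ : 0 < ε * r / 4 := by positivity
  filter_upwards [hG _ (dist_mem_uniformity hδ), hd.prod_mk hd] with i hi hdi y hy
  have hsub : ball y r ⊆ ball c (r + r) :=
    ball_subset_ball' (add_le_add_right (mem_ball.1 hy).le r)
  have hdiff (j) (hj : DifferentiableOn ℂ (G j) (ball c (r + r))) : DifferentiableAt ℂ (G j) y :=
    (hj.mono hsub).differentiableAt (ball_mem_nhds y hr)
  have hle : ‖fderiv ℂ (G i.1 - G i.2) y‖ ≤ 2 * (ε * r / 4) / r :=
    norm_fderiv_le_of_forall_norm_le hr ((hdi.1.sub hdi.2).mono hsub) fun z hz => by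
      simpa only [Pi.sub_apply, ← dist_eq_norm] using (hi z (hsub hz)).le
  apply hεu
  calc dist (fderiv ℂ (G i.1) y) (fderiv ℂ (G i.2) y) = ‖fderiv ℂ (G i.1 - G i.2) y‖ := by
        rw [fderiv_sub (hdiff _ hdi.1) (hdiff _ hdi.2), dist_eq_norm]
    _ ≤ 2 * (ε * r / 4) / r := hle
    _ = ε / 2 := by field_simp; norm_num
    _ < ε := half_lt_self hε

theorem differentiableOn_of_tendstoUniformlyOn [CompleteSpace F] {ι : Type*} {l : Filter ι}
    [NeBot l] {G : ι → E → F} (hU : IsOpen U) (hG : TendstoUniformlyOn G f l U)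
    (hd : ∀ᶠ i in l, DifferentiableOn ℂ (G i) U) : DifferentiableOn ℂ f U := by
  intro p hp
  obtain ⟨ε, hε, hεU⟩ := isOpen_iff.1 hU p hp
  rw [← add_halves ε] at hεU
  have hcauchy : UniformCauchySeqOn (fun i => fderiv ℂ (G i)) l (ball p (ε / 2)) :=
    uniformCauchySeqOn_fderiv (half_pos hε) (hG.uniformCauchySeqOn.mono hεU)
      (hd.mono fun i hi => hi.mono hεU)
  have hconv (x : E) (hx : x ∈ ball p (ε / 2)) :
      ∃ L, Tendsto (fun i => fderiv ℂ (G i) x) l (𝓝 L) :=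
    CompleteSpace.complete (hcauchy.cauchy_map hx)
  choose! f' hf' using hconv
  have hlim : TendstoUniformlyOnFilter (fun i => fderiv ℂ (G i)) f' l (𝓝 p) :=
    (tendstoUniformlyOn_iff_tendstoUniformlyOnFilter.1
      (hcauchy.tendstoUniformlyOn_of_tendsto hf')).mono_right
        (le_principal_iff.2 (ball_mem_nhds p (half_pos hε)))
  have hderiv : ∀ᶠ q : ι × E in l ×ˢ 𝓝 p, HasFDerivAt (G q.1) (fderiv ℂ (G q.1) q.2) q.2 :=
    (hd.prod_mk (hU.mem_nhds hp)).mono fun q hq =>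
      (hq.1.differentiableAt (hU.mem_nhds hq.2)).hasFDerivAt
  have hpt : ∀ᶠ x in 𝓝 p, Tendsto (fun i => G i x) l (𝓝 (f x)) :=
    eventually_of_mem (hU.mem_nhds hp) fun x hx => hG.tendsto_at hx
  exact (hasFDerivAt_of_tendstoUniformlyOnFilter hlim hderiv hpt).differentiableAt
    |>.differentiableWithinAt

theorem norm_smul_sub_sub_fderiv_le_of_forall_norm_le (hf : DifferentiableOn ℂ f (ball c R))
    (hM : ∀ z ∈ ball c R, ‖f z‖ ≤ M) {t : ℂ} (ht : t ≠ 0) {v : E} (hv : ‖t • v‖ < R) :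
    ‖t⁻¹ • (f (c + t • v) - f c) - fderiv ℂ f c v‖ ≤ 4 * M * (‖v‖ / R) ^ 2 * ‖t‖ := by
  have hmem : c + t • v ∈ ball c R := by simpa [mem_ball_iff_norm] using hv
  have hquot : t⁻¹ • (f (c + t • v) - f c) - fderiv ℂ f c v =
      t⁻¹ • (f (c + t • v) - f c - fderiv ℂ f c (t • v)) := by
    rw [map_smul, smul_sub _ _ (t • _), inv_smul_smul₀ ht]
  have hle := norm_sub_sub_fderiv_le_of_forall_norm_le hf hM hmem
  rw [add_sub_cancel_left] at hle
  calc ‖t⁻¹ • (f (c + t • v) - f c) - fderiv ℂ f c v‖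
      ≤ ‖t‖⁻¹ * (4 * M * (‖t • v‖ / R) ^ 2) := by
        rw [hquot, norm_smul, norm_inv]
        gcongr
    _ = 4 * M * (‖v‖ / R) ^ 2 * ‖t‖ := by
        have := norm_ne_zero_iff.2 ht
        rw [norm_smul]
        field_simp

theorem eventually_norm_mul_lt {𝕜 : Type*} [NormedField 𝕜] {r : ℝ} (hr : 0 < r) (B : ℝ) :
    ∀ᶠ t : 𝕜 in 𝓝 0, ‖t‖ * B < r := by
  have hcont : ContinuousAt (fun t : 𝕜 => ‖t‖ * B) 0 := by fun_prop
  exact hcont.eventually_lt_const (by simpa using hr)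

theorem tendstoUniformlyOn_fderiv_apply {V : E → E} {r B : ℝ} (hr : 0 < r)
    (hf : DifferentiableOn ℂ f (ball c (r + r))) (hM : ∀ z ∈ ball c (r + r), ‖f z‖ ≤ M)
    (hB : ∀ z ∈ ball c r, ‖V z‖ ≤ B) :
    TendstoUniformlyOn (fun (t : ℂ) x => t⁻¹ • (f (x + t • V x) - f x))
      (fun x => fderiv ℂ f x (V x)) (𝓝[≠] 0) (ball c r) := by
  rw [Metric.tendstoUniformlyOn_iff]
  intro ε hε
  filter_upwards [self_mem_nhdsWithin, (eventually_norm_mul_lt hr B).filter_mono nhdsWithin_le_nhds,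
    (eventually_norm_mul_lt hε (4 * M * (B / r) ^ 2)).filter_mono nhdsWithin_le_nhds]
    with t ht htr htε x hx
  have hsub : ball x r ⊆ ball c (r + r) := ball_subset_ball' (add_le_add_right (mem_ball.1 hx).le r)
  have hM0 : 0 ≤ M := (norm_nonneg _).trans (hM x (hsub (mem_ball_self hr)))
  have htV : ‖t • V x‖ < r := by
    rw [norm_smul]
    exact (mul_le_mul_of_nonneg_left (hB x hx) (norm_nonneg t)).trans_lt htr
  rw [dist_comm, dist_eq_norm]
  calc ‖t⁻¹ • (f (x + t • V x) - f x) - fderiv ℂ f x (V x)‖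
      ≤ 4 * M * (‖V x‖ / r) ^ 2 * ‖t‖ :=
        norm_smul_sub_sub_fderiv_le_of_forall_norm_le (hf.mono hsub) (fun z hz => hM z (hsub hz))
          ht htV
    _ ≤ 4 * M * (B / r) ^ 2 * ‖t‖ := by
        gcongr
        exact hB x hx
    _ < ε := by rwa [mul_comm]

theorem differentiableOn_fderiv_apply [CompleteSpace F] {V : E → E} (hU : IsOpen U)
    (hf : DifferentiableOn ℂ f U) (hV : DifferentiableOn ℂ V U) :
    DifferentiableOn ℂ (fun x => fderiv ℂ f x (V x)) U := by
  intro p hp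
  obtain ⟨R, hR, M, hRU, hM⟩ :=
    exists_ball_forall_norm_le hU (hf.prodMk hV).continuousOn hp
  obtain ⟨r, hr, rfl⟩ : ∃ r > 0, R = r + r := ⟨R / 2, half_pos hR, (add_halves R).symm⟩
  have hrR : ball p r ⊆ ball p (r + r) := ball_subset_ball (by linarith)
  have hMV : ∀ z ∈ ball p r, ‖V z‖ ≤ M := fun z hz => (norm_snd_le (f z, V z)).trans (hM z (hrR hz))
  have hlim := tendstoUniformlyOn_fderiv_apply hr (hf.mono hRU)
    (fun z hz => (norm_fst_le (f z, V z)).trans (hM z hz)) hMV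
  have hquot : ∀ᶠ t : ℂ in 𝓝[≠] 0,
      DifferentiableOn ℂ (fun x => t⁻¹ • (f (x + t • V x) - f x)) (ball p r) := by
    filter_upwards [(eventually_norm_mul_lt hr M).filter_mono nhdsWithin_le_nhds] with t ht
    have hmaps : MapsTo (fun x => x + t • V x) (ball p r) U := fun x hx => hRU <| by
      have htV : ‖t • V x‖ < r := by
        rw [norm_smul]
        exact (mul_le_mul_of_nonneg_left (hMV x hx) (norm_nonneg t)).trans_lt ht
      rw [mem_ball_iff_norm] at hx ⊢
      calc ‖x + t • V x - p‖ = ‖(x - p) + t • V x‖ := by congr 1; abel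
        _ ≤ ‖x - p‖ + ‖t • V x‖ := norm_add_le _ _
        _ < r + r := add_lt_add hx htV
    have hVr := hV.mono (hrR.trans hRU)
    exact ((hf.comp (differentiableOn_id.add (hVr.const_smul t)) hmaps).sub
      (hf.mono (hrR.trans hRU))).const_smul t⁻¹
  exact (differentiableOn_of_tendstoUniformlyOn isOpen_ball hlim hquot).differentiableAt
    (ball_mem_nhds p hr) |>.differentiableWithinAt

end Holomorphic

section MatrixCalculus

variable {𝕜 E m n : Type*} [NontriviallyNormedField 𝕜] [NormedAddCommGroup E] [NormedSpace 𝕜 E]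
  {s : Set E} {p : E}

theorem differentiableOn_matrix [Finite m] [Finite n] {A : E → Matrix m n 𝕜}
    (hA : ∀ i j, DifferentiableOn 𝕜 (fun x => A x i j) s) : DifferentiableOn 𝕜 A s := by
  have := Fintype.ofFinite m
  have := Fintype.ofFinite n
  exact differentiableOn_pi.2 fun i => differentiableOn_pi.2 fun j => hA i j

open scoped Matrix.Norms.Operator in
theorem isSymm_fderiv_apply [CompleteSpace 𝕜] [Finite n] {A : E → Matrix n n 𝕜}
    (hd : DifferentiableAt 𝕜 A p) (hA : ∀ᶠ x in nhds p, (A x).IsSymm) (v : E) :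
    (fderiv 𝕜 A p v).IsSymm := by
  have := Fintype.ofFinite n
  let T : Matrix n n 𝕜 →L[𝕜] Matrix n n 𝕜 :=
    (transposeLinearEquiv n n 𝕜 𝕜).toLinearMap.toContinuousLinearMap
  have hT : HasFDerivAt (fun x => (A x)ᵀ) (T ∘L fderiv 𝕜 A p) p :=
    T.hasFDerivAt.comp p hd.hasFDerivAt
  have hT' : HasFDerivAt A (T ∘L fderiv 𝕜 A p) p :=
    hT.congr_of_eventuallyEq (hA.mono fun x hx => hx.eq.symm)
  exact congr($(hT'.unique hd.hasFDerivAt) v)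

variable [Fintype n]

theorem differentiableWithinAt_dotProduct {v w : E → n → 𝕜} (hv : DifferentiableWithinAt 𝕜 v s p)
    (hw : DifferentiableWithinAt 𝕜 w s p) :
    DifferentiableWithinAt 𝕜 (fun x => v x ⬝ᵥ w x) s p :=
  .fun_sum fun i _ => (differentiableWithinAt_pi.1 hv i).mul (differentiableWithinAt_pi.1 hw i)

theorem differentiableWithinAt_mulVec [Finite m] {A : E → Matrix m n 𝕜} {v : E → n → 𝕜}
    (hA : DifferentiableWithinAt 𝕜 A s p) (hv : DifferentiableWithinAt 𝕜 v s p) :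
    DifferentiableWithinAt 𝕜 (fun x => A x *ᵥ v x) s p := by
  have := Fintype.ofFinite m
  exact differentiableWithinAt_pi.2 fun i =>
    differentiableWithinAt_dotProduct (differentiableWithinAt_pi.1 hA i) hv

variable [CompleteSpace 𝕜]

open scoped Matrix.Norms.Operator in
theorem differentiableWithinAt_matrix_inv [DecidableEq n] {A : E → Matrix n n 𝕜}
    (hA : DifferentiableWithinAt 𝕜 A s p) (hinv : IsUnit (A p)) :
    DifferentiableWithinAt 𝕜 (fun x => (A x)⁻¹) s p := by
  have : @CompleteSpace (Matrix n n 𝕜) PseudoMetricSpace.toUniformSpace :=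
    FiniteDimensional.complete 𝕜 (Matrix n n 𝕜)
  simp only [nonsing_inv_eq_ringInverse]
  exact DifferentiableWithinAt.inverse hA hinv

theorem fderiv_dotProduct {v w : E → n → 𝕜} (hv : DifferentiableAt 𝕜 v p)
    (hw : DifferentiableAt 𝕜 w p) (x : E) :
    fderiv 𝕜 (fun y => v y ⬝ᵥ w y) p x = fderiv 𝕜 v p x ⬝ᵥ w p + v p ⬝ᵥ fderiv 𝕜 w p x := by
  let B := (dotProductBilin 𝕜 𝕜 : (n → 𝕜) →ₗ[𝕜] (n → 𝕜) →ₗ[𝕜] 𝕜).toContinuousBilinearMap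
  rw [add_comm]
  exact congr($(B.fderiv_of_bilinear hv hw) x)

open scoped Matrix.Norms.Operator in
theorem fderiv_mulVec [Finite m] {A : E → Matrix m n 𝕜} {v : E → n → 𝕜}
    (hA : DifferentiableAt 𝕜 A p) (hv : DifferentiableAt 𝕜 v p) (x : E) :
    fderiv 𝕜 (fun y => A y *ᵥ v y) p x = fderiv 𝕜 A p x *ᵥ v p + A p *ᵥ fderiv 𝕜 v p x := by
  have := Fintype.ofFinite m
  let B := (mulVecBilin 𝕜 𝕜 : Matrix m n 𝕜 →ₗ[𝕜] (n → 𝕜) →ₗ[𝕜] m → 𝕜).toContinuousBilinearMap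
  rw [add_comm]
  exact congr($(ContinuousLinearMap.fderiv_of_bilinear (E := Matrix m n 𝕜) B hA hv) x)

end MatrixCalculus

section MatrixForm

variable {R n : Type*} [Fintype n]

theorem dotProduct_mulVec_comm_of_isSymm [CommSemiring R] {A : Matrix n n R} (hA : A.IsSymm)
    (v w : n → R) : v ⬝ᵥ (A *ᵥ w) = w ⬝ᵥ (A *ᵥ v) := by
  conv_lhs => rw [← hA.eq, dotProduct_transpose_mulVec]

theorem eq_of_forall_dotProduct_mulVec_eq [CommRing R] [DecidableEq n] {A : Matrix n n R}
    (hA : IsUnit A) {v w : n → R} (h : ∀ x, v ⬝ᵥ (A *ᵥ x) = w ⬝ᵥ (A *ᵥ x)) : v = w := by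
  refine dotProduct_eq v w fun y => ?_
  obtain ⟨x, rfl⟩ := mulVec_surjective_iff_isUnit.2 hA y
  exact h x

end MatrixForm

section Christoffel

variable {𝕜 n : Type*} [NontriviallyNormedField 𝕜] [Fintype n] [DecidableEq n]
  {g : (n → 𝕜) → Matrix n n 𝕜} {p : n → 𝕜}

/-- The Christoffel symbols of the first kind of `g` at `p`, as the trilinear form
`(v, w, x) ↦ (∂_v g(w, x) + ∂_w g(v, x) - ∂_x g(v, w)) / 2`. -/
noncomputable def christoffelForm (g : (n → 𝕜) → Matrix n n 𝕜) (p : n → 𝕜) :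
    (n → 𝕜) →ₗ[𝕜] (n → 𝕜) →ₗ[𝕜] (n → 𝕜) →ₗ[𝕜] 𝕜 :=
  -- `(-1) •` because instance search finds no subtraction on threefold nested linear maps.
  let T : (n → 𝕜) →ₗ[𝕜] (n → 𝕜) →ₗ[𝕜] (n → 𝕜) →ₗ[𝕜] 𝕜 :=
    (toLinearMap₂' 𝕜).toLinearMap ∘ₗ (fderiv 𝕜 g p).toLinearMap
  (2 : 𝕜)⁻¹ • (T + T.flip + (-1 : 𝕜) • LinearMap.lflip.toLinearMap ∘ₗ T.flip)

theorem christoffelForm_apply (v w x : n → 𝕜) :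
    christoffelForm g p v w x = 2⁻¹ * (w ⬝ᵥ (fderiv 𝕜 g p v *ᵥ x) + v ⬝ᵥ (fderiv 𝕜 g p w *ᵥ x)
      - v ⬝ᵥ (fderiv 𝕜 g p x *ᵥ w)) := by
  simp [christoffelForm, toLinearMap₂'_apply', sub_eq_add_neg, mul_add]

theorem christoffelForm_comm (hsymm : ∀ x, (fderiv 𝕜 g p x).IsSymm) (v w : n → 𝕜) :
    christoffelForm g p v w = christoffelForm g p w v := by
  refine LinearMap.ext fun x => ?_
  rw [christoffelForm_apply, christoffelForm_apply, dotProduct_mulVec_comm_of_isSymm (hsymm x) v w]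
  ring

theorem christoffelForm_add_christoffelForm [NeZero (2 : 𝕜)]
    (hsymm : ∀ x, (fderiv 𝕜 g p x).IsSymm) (v w x : n → 𝕜) :
    christoffelForm g p v w x + christoffelForm g p v x w = w ⬝ᵥ (fderiv 𝕜 g p v *ᵥ x) := by
  rw [christoffelForm_apply, christoffelForm_apply, dotProduct_mulVec_comm_of_isSymm (hsymm v) x w]
  field_simp
  ring

/-- The Christoffel symbols of the second kind of `g` at `p`, as a bilinear map: the vector
`christoffel g p v w` represents the linear form `christoffelForm g p v w` with respect to `g p`. -/
noncomputable def christoffel (g : (n → 𝕜) → Matrix n n 𝕜) (p : n → 𝕜) :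
    (n → 𝕜) →ₗ[𝕜] (n → 𝕜) →ₗ[𝕜] n → 𝕜 :=
  (christoffelForm g p).compr₂ ((g p)⁻¹.mulVecLin ∘ₗ (dotProductEquiv 𝕜 n).symm.toLinearMap)

theorem christoffel_apply (v w : n → 𝕜) :
    christoffel g p v w = (g p)⁻¹ *ᵥ fun i => christoffelForm g p v w (Pi.single i 1) := rfl

theorem christoffel_comm (hsymm : ∀ x, (fderiv 𝕜 g p x).IsSymm) (v w : n → 𝕜) :
    christoffel g p v w = christoffel g p w v := by
  rw [christoffel_apply, christoffel_apply, christoffelForm_comm hsymm]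

theorem dotProduct_mulVec_christoffel (hinv : IsUnit (g p)) (v w x : n → 𝕜) :
    x ⬝ᵥ (g p *ᵥ christoffel g p v w) = christoffelForm g p v w x := by
  rw [christoffel_apply, mulVec_mulVec, mul_nonsing_inv _ ((isUnit_iff_isUnit_det _).1 hinv),
    one_mulVec, dotProduct_comm]
  exact congr($((dotProductEquiv 𝕜 n).apply_symm_apply (christoffelForm g p v w)) x)

theorem christoffel_dotProduct_mulVec_add [NeZero (2 : 𝕜)] (hinv : IsUnit (g p))
    (hg : (g p).IsSymm) (hsymm : ∀ x, (fderiv 𝕜 g p x).IsSymm) (v w x : n → 𝕜) :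
    christoffel g p v w ⬝ᵥ (g p *ᵥ x) + w ⬝ᵥ (g p *ᵥ christoffel g p v x) =
      w ⬝ᵥ (fderiv 𝕜 g p v *ᵥ x) := by
  rw [dotProduct_mulVec_comm_of_isSymm hg, dotProduct_mulVec_christoffel hinv,
    dotProduct_mulVec_christoffel hinv, christoffelForm_add_christoffelForm hsymm]

end Christoffel

section LeviCivita

variable {N : ℕ} {U : Set (Fin N → ℂ)} {g : (Fin N → ℂ) → Matrix (Fin N) (Fin N) ℂ}
  {V W X : (Fin N → ℂ) → (Fin N → ℂ)} {p : Fin N → ℂ}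

theorem pairing_comm (hsymm : (g p).IsSymm) (V W : (Fin N → ℂ) → (Fin N → ℂ)) :
    pairing N g V W p = pairing N g W V p :=
  dotProduct_mulVec_comm_of_isSymm hsymm _ _

theorem act_pairing (X : (Fin N → ℂ) → (Fin N → ℂ)) (hg : DifferentiableAt ℂ g p)
    (hV : DifferentiableAt ℂ V p) (hW : DifferentiableAt ℂ W p) :
    act N X (pairing N g V W) p =
      fderiv ℂ V p (X p) ⬝ᵥ (g p *ᵥ W p) + V p ⬝ᵥ (fderiv ℂ g p (X p) *ᵥ W p)
        + V p ⬝ᵥ (g p *ᵥ fderiv ℂ W p (X p)) := by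
  have hgW : DifferentiableAt ℂ (fun q => g q *ᵥ W q) p :=
    (differentiableWithinAt_mulVec hg.differentiableWithinAt
      hW.differentiableWithinAt).differentiableAt Filter.univ_mem
  calc act N X (pairing N g V W) p = fderiv ℂ (fun q => V q ⬝ᵥ (g q *ᵥ W q)) p (X p) := rfl
    _ = _ := by rw [fderiv_dotProduct hV hgW, fderiv_mulVec hg hW, dotProduct_add, add_assoc]

open scoped Matrix.Norms.Operator in
theorem differentiableOn_christoffelForm (hU : IsOpen U) (hg : DifferentiableOn ℂ g U)
    (hV : DifferentiableOn ℂ V U) (hW : DifferentiableOn ℂ W U) (hX : DifferentiableOn ℂ X U) :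
    DifferentiableOn ℂ (fun p => christoffelForm g p (V p) (W p) (X p)) U := by
  have hterm {A B C : (Fin N → ℂ) → (Fin N → ℂ)} (hA : DifferentiableOn ℂ A U)
      (hB : DifferentiableOn ℂ B U) (hC : DifferentiableOn ℂ C U) :
      DifferentiableOn ℂ (fun p => A p ⬝ᵥ (fderiv ℂ g p (B p) *ᵥ C p)) U :=
    fun p hp => differentiableWithinAt_dotProduct (hA p hp) <| differentiableWithinAt_mulVec
      (differentiableOn_fderiv_apply (F := Matrix (Fin N) (Fin N) ℂ) hU hg hB p hp) (hC p hp)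
  simp only [christoffelForm_apply]
  exact (((hterm hW hV hX).add (hterm hV hW hX)).sub (hterm hV hX hW)).const_mul _

/-- The Levi-Civita connexion `D_V W = dW(V) + Γ(V, W)` of the metric `g`. -/
noncomputable def leviCivita (g : (Fin N → ℂ) → Matrix (Fin N) (Fin N) ℂ)
    (V W : (Fin N → ℂ) → (Fin N → ℂ)) (p : Fin N → ℂ) : Fin N → ℂ :=
  fderiv ℂ W p (V p) + christoffel g p (V p) (W p)

theorem differentiableOn_leviCivita (hU : IsOpen U) (hg : DifferentiableOn ℂ g U)
    (hinv : ∀ p ∈ U, IsUnit (g p)) (hV : DifferentiableOn ℂ V U) (hW : DifferentiableOn ℂ W U) :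
    DifferentiableOn ℂ (leviCivita g V W) U :=
  (differentiableOn_fderiv_apply hU hW hV).add fun p hp =>
    differentiableWithinAt_mulVec (differentiableWithinAt_matrix_inv (hg p hp) (hinv p hp)) <|
      differentiableWithinAt_pi.2 fun _ =>
        differentiableOn_christoffelForm hU hg hV hW (differentiableOn_const _) p hp

theorem leviCivita_smul_add_smul_left (f₁ f₂ : (Fin N → ℂ) → ℂ)
    (V₁ V₂ W : (Fin N → ℂ) → (Fin N → ℂ)) (p : Fin N → ℂ) :
    leviCivita g (fun q => f₁ q • V₁ q + f₂ q • V₂ q) W p =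
      f₁ p • leviCivita g V₁ W p + f₂ p • leviCivita g V₂ W p := by
  simp only [leviCivita, map_add, map_smul, LinearMap.add_apply, LinearMap.smul_apply, smul_add]
  abel

theorem leviCivita_add_right (V : (Fin N → ℂ) → (Fin N → ℂ)) {W₁ W₂ : (Fin N → ℂ) → (Fin N → ℂ)}
    (hW₁ : DifferentiableAt ℂ W₁ p) (hW₂ : DifferentiableAt ℂ W₂ p) :
    leviCivita g V (fun q => W₁ q + W₂ q) p = leviCivita g V W₁ p + leviCivita g V W₂ p := by
  simp only [leviCivita, fderiv_fun_add hW₁ hW₂, map_add, _root_.add_apply]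
  abel

theorem leviCivita_smul_right {f : (Fin N → ℂ) → ℂ} (V : (Fin N → ℂ) → (Fin N → ℂ))
    (hf : DifferentiableAt ℂ f p) (hW : DifferentiableAt ℂ W p) :
    leviCivita g V (fun q => f q • W q) p = act N V f p • W p + f p • leviCivita g V W p := by
  simp only [leviCivita, act, fderiv_fun_smul hf hW, map_smul, _root_.add_apply, _root_.smul_apply,
    ContinuousLinearMap.smulRight_apply, smul_add]
  abel

theorem leviCivita_const_smul_right (a : ℂ) (V : (Fin N → ℂ) → (Fin N → ℂ))
    (hW : DifferentiableAt ℂ W p) :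
    leviCivita g V (fun q => a • W q) p = a • leviCivita g V W p := by
  simpa [act] using leviCivita_smul_right V (differentiableAt_const a) hW

theorem bracket_eq_leviCivita_sub (hsymm : ∀ x, (fderiv ℂ g p x).IsSymm)
    (V W : (Fin N → ℂ) → (Fin N → ℂ)) :
    bracket N V W p = leviCivita g V W p - leviCivita g W V p := by
  rw [bracket, leviCivita, leviCivita, christoffel_comm hsymm (W p), add_sub_add_right_eq_sub]

theorem act_pairing_eq_leviCivita (hg : DifferentiableAt ℂ g p)
    (hsymm : ∀ᶠ q in nhds p, (g q).IsSymm) (hinv : IsUnit (g p))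
    (X : (Fin N → ℂ) → (Fin N → ℂ)) (hV : DifferentiableAt ℂ V p) (hW : DifferentiableAt ℂ W p) :
    act N X (pairing N g V W) p =
      pairing N g (leviCivita g X V) W p + pairing N g V (leviCivita g X W) p := by
  rw [act_pairing X hg hV hW, ← christoffel_dotProduct_mulVec_add hinv hsymm.self_of_nhds
    (isSymm_fderiv_apply hg hsymm)]
  simp only [pairing, leviCivita, add_dotProduct, mulVec_add, dotProduct_add]
  ring

theorem isLeviCivita_leviCivita (hU : IsOpen U) (hg : DifferentiableOn ℂ g U)
    (hsymm : ∀ p ∈ U, (g p).IsSymm) (hinv : ∀ p ∈ U, IsUnit (g p)) :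
    IsLeviCivita N U g (leviCivita g) := by
  have hdiff {W : (Fin N → ℂ) → (Fin N → ℂ)} (hW : HolVF N U W) {p : Fin N → ℂ} (hp : p ∈ U) :
      DifferentiableAt ℂ W p := hW.differentiableAt (hU.mem_nhds hp)
  have hgdiff {p : Fin N → ℂ} (hp : p ∈ U) : DifferentiableAt ℂ g p :=
    hg.differentiableAt (hU.mem_nhds hp)
  have hsymm' {p : Fin N → ℂ} (hp : p ∈ U) : ∀ᶠ q in nhds p, (g q).IsSymm :=
    Filter.eventually_of_mem (hU.mem_nhds hp) hsymm
  refine ⟨fun V W hV hW => differentiableOn_leviCivita hU hg hinv hV hW, ?_, ?_, ?_, ?_, ?_⟩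
  · intro f₁ f₂ V₁ V₂ W _ _ _ _ _ p _
    exact leviCivita_smul_add_smul_left f₁ f₂ V₁ V₂ W p
  · intro a b V W₁ W₂ _ hW₁ hW₂ p hp
    rw [leviCivita_add_right V (W₁ := fun q => a • W₁ q) (W₂ := fun q => b • W₂ q)
        ((hdiff hW₁ hp).const_smul a) ((hdiff hW₂ hp).const_smul b),
      leviCivita_const_smul_right a V (hdiff hW₁ hp),
      leviCivita_const_smul_right b V (hdiff hW₂ hp)]
  · intro f V W hf _ hW p hp
    exact leviCivita_smul_right V (hf.differentiableAt (hU.mem_nhds hp)) (hdiff hW hp)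
  · intro V W _ _ p hp
    exact bracket_eq_leviCivita_sub (isSymm_fderiv_apply (hgdiff hp) (hsymm' hp)) V W
  · intro X V W _ hV hW p hp
    exact act_pairing_eq_leviCivita (hgdiff hp) (hsymm' hp) (hinv p hp) X (hdiff hV hp)
      (hdiff hW hp)

variable {D D' : ((Fin N → ℂ) → (Fin N → ℂ)) → ((Fin N → ℂ) → (Fin N → ℂ)) →
  ((Fin N → ℂ) → (Fin N → ℂ))}

theorem IsLeviCivita.koszul (hD : IsLeviCivita N U g D) (hp : p ∈ U) (hsymm : (g p).IsSymm)
    (hV : HolVF N U V) (hW : HolVF N U W) (hX : HolVF N U X) :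
    2 * pairing N g (D V W) X p
      = act N V (pairing N g W X) p + act N W (pairing N g X V) p
        - act N X (pairing N g V W) p
        - pairing N g V (bracket N W X) p
        + pairing N g W (bracket N X V) p
        + pairing N g X (bracket N V W) p := by
  obtain ⟨-, -, -, -, htorsion, hmetric⟩ := hD
  have hbracket {A B C : (Fin N → ℂ) → (Fin N → ℂ)} (hB : HolVF N U B) (hC : HolVF N U C) :
      pairing N g A (bracket N B C) p = pairing N g A (D B C) p - pairing N g A (D C B) p := by
    simp only [pairing, htorsion B C hB hC p hp, mulVec_sub, dotProduct_sub]
  rw [hmetric V W X hV hW hX p hp, hmetric W X V hW hX hV p hp, hmetric X V W hX hV hW p hp,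
    hbracket hW hX, hbracket hX hV, hbracket hV hW, pairing_comm hsymm (D V W) X,
    pairing_comm hsymm (D W X) V, pairing_comm hsymm (D X V) W]
  ring

theorem IsLeviCivita.unique (hD : IsLeviCivita N U g D) (hD' : IsLeviCivita N U g D')
    (hp : p ∈ U) (hsymm : (g p).IsSymm) (hinv : IsUnit (g p)) (hV : HolVF N U V)
    (hW : HolVF N U W) : D V W p = D' V W p := by
  refine eq_of_forall_dotProduct_mulVec_eq hinv fun x => ?_
  have hx : HolVF N U fun _ => x := differentiableOn_const x
  exact mul_left_cancel₀ two_ne_zero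
    ((hD.koszul hp hsymm hV hW hx).trans (hD'.koszul hp hsymm hV hW hx).symm)

end LeviCivita

/-- Existence and uniqueness of the holomorphic Levi-Civita connexion of a
nondegenerate holomorphic metric, in a coordinate chart, together with the
Koszul formula characterizing it. -/
theorem leviCivita_exists_unique
    (N : ℕ) (hN : 1 ≤ N) (U : Set (Fin N → ℂ)) (hU : IsOpen U)
    (g : (Fin N → ℂ) → Matrix (Fin N) (Fin N) ℂ)
    (hg : ∀ i j, DifferentiableOn ℂ (fun p => g p i j) U)
    (hsymm : ∀ p ∈ U, (g p).IsSymm)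
    (hinv : ∀ p ∈ U, IsUnit (g p)) :
    ∃ D, IsLeviCivita N U g D ∧
      (∀ V W X, HolVF N U V → HolVF N U W → HolVF N U X →
        ∀ p ∈ U,
          2 * pairing N g (D V W) X p
            = act N V (pairing N g W X) p + act N W (pairing N g X V) p
              - act N X (pairing N g V W) p
              - pairing N g V (bracket N W X) p
              + pairing N g W (bracket N X V) p
              + pairing N g X (bracket N V W) p) ∧
      ∀ D', IsLeviCivita N U g D' →
        ∀ V W, HolVF N U V → HolVF N U W → ∀ p ∈ U, D V W p = D' V W p := by
  have hD := isLeviCivita_leviCivita hU (differentiableOn_matrix hg) hsymm hinv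
  exact ⟨leviCivita g, hD, fun V W X hV hW hX p hp => hD.koszul hp (hsymm p hp) hV hW hX,
    fun D' hD' V W hV hW p hp => hD.unique hD' hp (hsymm p hp) (hinv p hp) hV hW⟩

end LeviCivitaChart
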